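/- Let k ≥ 1 and n ≥ 1 be integers, let (m₁,…,mₙ) be a tuple of nonnegative integers, and let N be a complex number. Then (1/((2πi)^{k}·k!)) ∮_{|w₁|=1}⋯∮_{|w_k|=1} ( e^{N(w₁+⋯+w_k)} / ∏_{i=1}^{k} w_i^{2k} ) · Δ²(w) · ( Σ_{l=1}^{k} 1/w_l − N )^{m₁} · ∏_{j=2}^{n} ( Σ_{l=1}^{k} 1/w_l^{j} )^{m_j} dw₁⋯dw_k = N^{k²+Σ_{s=1}^{n} s·m_s} · Σ (−1)^{m₁₀} · C(m₁; m₁₀,m₁₁,…,m₁ₖ) · ( ∏_{s=2}^{n} C(m_s; m_{s1},…,m_{sk}) ) · ( ∏_{i=1}^{k} 1/(2k + Σ_{s=1}^{n} s·m_{si} − i)! ) · ∏_{1≤i<j≤k} ( Σ_{s=1}^{n} s·m_{sj} − Σ_{s=1}^{n} s·m_{si} − j + i ), where the sum is over all nonnegative integers m₁₀, m₁₁,…,m₁ₖ with m₁₀+m₁₁+⋯+m₁ₖ = m₁ and, for each s = 2,…,n, all nonnegative integers m_{s1},…,m_{sk} with m_{s1}+⋯+m_{sk} = m_s. -/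

import Mathlib

open Finset

noncomputable section

/-- The iterated contour integral `∮_{|w₁|=1} ⋯ ∮_{|w_n|=1} f(w₁,…,w_n) dw_n ⋯ dw₁`,
each circle positively oriented. -/
def multiCircle : (n : ℕ) → ((Fin n → ℂ) → ℂ) → ℂ
  | 0, f => f ![]
  | n + 1, f => circleIntegral (fun w => multiCircle n (fun v => f (Fin.cons w v))) 0 1

/-! On the torus the rest of the integrand is symmetric, so in `Δ(w)²` one factor `Δ(w)` may be
replaced by `k!` times its diagonal monomial `∏ wᵢ ^ i`. Expanding the powers of power sums by the
multinomial theorem, each monomial leaves a product of functions of one variable times `Δ(w)`, whose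
integral is the determinant of the one-variable integrals. By Cauchy's formula its entries are
`2πi · N ^ (aᵢ - j) / (aᵢ - j)!` with `aᵢ = 2k + eᵢ - i - 1` (indices from 0), where `wᵢ⁻¹` occurs
to the power `eᵢ`. Pulling `1 / aᵢ!` out of row `i` leaves falling factorials of `aᵢ`, monic
polynomials of degree `j`, hence the Vandermonde determinant of the `aᵢ`. -/

section Torus

variable {n : ℕ} {E : Type*} [NormedAddCommGroup E]

open MeasureTheory

lemma measurePreserving_restrict_Icc_comp_perm {ι : Type*} [Fintype ι] (σ : Equiv.Perm ι)
    (a b : ℝ) :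
    MeasurePreserving (MeasurableEquiv.arrowCongr' σ.symm (.refl ℝ))
      (volume.restrict (Set.Icc (fun _ => a) fun _ => b))
      (volume.restrict (Set.Icc (fun _ => a) fun _ => b)) := by
  set e : (ι → ℝ) ≃ᵐ (ι → ℝ) := MeasurableEquiv.arrowCongr' σ.symm (.refl ℝ)
  have e_apply (θ : ι → ℝ) (i : ι) : e θ i = θ (σ i) := rfl
  have preimage_Icc :
      e ⁻¹' Set.Icc (fun _ => a) (fun _ => b) = Set.Icc (fun _ => a) fun _ => b := by
    ext θ
    simp only [Set.mem_Icc, Pi.le_def, Set.mem_preimage, e_apply]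
    exact and_congr (σ.forall_congr_right (q := (a ≤ θ ·))) (σ.forall_congr_right (q := (θ · ≤ b)))
  have h := (volume_preserving_arrowCongr' σ.symm (.refl ℝ) (.id _)).restrict_preimage
    (measurableSet_Icc (a := fun _ => a) (b := fun _ => b))
  rwa [preimage_Icc] at h

lemma torusIntegrable_comp_perm {f : (Fin n → ℂ) → E} {c : Fin n → ℂ} {R : Fin n → ℝ}
    (σ : Equiv.Perm (Fin n)) (hf : TorusIntegrable f (c ∘ σ) (R ∘ σ)) :
    TorusIntegrable (fun w => f (w ∘ σ)) c R :=
  (measurePreserving_restrict_Icc_comp_perm σ 0 (2 * Real.pi)).integrable_comp_of_integrable hf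

lemma torusIntegral_comp_perm [NormedSpace ℂ E] (f : (Fin n → ℂ) → E) (c : Fin n → ℂ)
    (R : Fin n → ℝ) (σ : Equiv.Perm (Fin n)) :
    (∯ w in T(c, R), f (w ∘ σ)) = torusIntegral f (c ∘ σ) (R ∘ σ) := by
  refine .trans (integral_congr_ae (.of_forall fun θ => ?_))
    ((measurePreserving_restrict_Icc_comp_perm σ 0 (2 * Real.pi)).integral_comp' _)
  exact congrArg (· • f (torusMap c R θ ∘ σ)) (Equiv.prod_comp σ fun i =>
    (R i * Complex.exp (θ i * Complex.I) * Complex.I : ℂ)).symm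

lemma torusIntegral_finset_sum [NormedSpace ℂ E] {ι : Type*} {s : Finset ι}
    {f : ι → (Fin n → ℂ) → E} {c : Fin n → ℂ} {R : Fin n → ℝ}
    (hf : ∀ i ∈ s, TorusIntegrable (f i) c R) :
    (∯ w in T(c, R), ∑ i ∈ s, f i w) = ∑ i ∈ s, torusIntegral (f i) c R := by
  simp only [torusIntegral, smul_sum]
  exact integral_finsetSum s fun i hi => (hf i hi).function_integrable

lemma torusIntegral_prod (f : Fin n → ℂ → ℂ) (c : Fin n → ℂ) (R : Fin n → ℝ) :
    (∯ w in T(c, R), ∏ i, f i (w i)) = ∏ i, circleIntegral (f i) (c i) (R i) := by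
  simp only [torusIntegral, circleIntegral_def_Icc, smul_eq_mul, ← prod_mul_distrib]
  rw [← Set.pi_univ_Icc, volume_pi, Measure.restrict_pi_pi,
    ← integral_fintype_prod_eq_prod (𝕜 := ℂ)]
  simp [torusMap, circleMap, deriv_circleMap]

lemma torusIntegrable_of_continuousOn {f : (Fin n → ℂ) → E} {c : Fin n → ℂ} {R : Fin n → ℝ}
    (hf : ContinuousOn f (Set.univ.pi fun i => Metric.sphere (c i) |R i|)) :
    TorusIntegrable f c R := by
  refine Continuous.integrableOn_Icc (hf.comp_continuous ?_ fun θ i _ => ?_)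
  · unfold torusMap; fun_prop
  · simp [torusMap]

lemma torusIntegrable_unit_of_continuousOn {f : (Fin n → ℂ) → E}
    (hf : ContinuousOn f (Set.univ.pi fun _ => Metric.sphere 0 1)) : TorusIntegrable f 0 1 :=
  torusIntegrable_of_continuousOn (by simpa using hf)

end Torus

lemma continuousOn_cons {X Y : Type*} [TopologicalSpace X] [TopologicalSpace Y] {n : ℕ} {x : X}
    {f : (Fin (n + 1) → X) → Y} {s : Fin (n + 1) → Set X} (hf : ContinuousOn f (Set.univ.pi s))
    (hx : x ∈ s 0) :
    ContinuousOn (fun w => f (Fin.cons x w)) (Set.univ.pi fun i : Fin n => s i.succ) := by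
  refine hf.comp (by fun_prop) fun w hw i _ => ?_
  cases i using Fin.cases with
  | zero => exact hx
  | succ i => exact hw i trivial

lemma multiCircle_eq_torusIntegral {n : ℕ} {f : (Fin n → ℂ) → ℂ}
    (hf : ContinuousOn f (Set.univ.pi fun _ => Metric.sphere 0 1)) :
    multiCircle n f = torusIntegral f 0 1 := by
  induction n with
  | zero => simp [multiCircle, Subsingleton.elim _ ![]]
  | succ n ih =>
    rw [torusIntegral_succ (torusIntegrable_unit_of_continuousOn hf)]
    exact circleIntegral.integral_congr zero_le_one fun x hx => ih (continuousOn_cons hf hx)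

section Determinants

open Matrix

lemma det_pow_sub_mul {ι R : Type*} [Fintype ι] [DecidableEq ι] [CommRing R] (x : R)
    {a b : ι → ℕ} (hab : ∀ i j, b j ≤ a i) (A : Matrix ι ι R) :
    (of fun i j => x ^ (a i - b j) * A i j).det = x ^ (∑ i, (a i - b i)) * A.det := by
  have sum_sub_eq (σ : Equiv.Perm ι) : ∑ i, (a (σ i) - b i) = ∑ i, (a i - b i) := by
    rw [sum_tsub_distrib _ fun i _ => hab (σ i) i, sum_tsub_distrib _ fun i _ => hab i i,
      Equiv.sum_comp σ a]
  simp only [det_apply', of_apply, prod_mul_distrib, prod_pow_eq_pow_sum, sum_sub_eq, mul_sum,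
    mul_left_comm]

lemma det_descFactorial {R : Type*} [CommRing R] [IsDomain R] {n : ℕ} (a : Fin n → ℕ) :
    (of fun i j : Fin n => ((a i).descFactorial j : R)).det =
      (vandermonde fun i => (a i : R)).det := by
  rw [det_eval_matrixOfPolynomials_eq_det_vandermonde (fun i => (a i : R))
    (fun i : Fin n => descPochhammer R i) (fun i => descPochhammer_natDegree R i)
    (fun i => monic_descPochhammer R i)]
  simp only [descPochhammer_eval_eq_descFactorial]

lemma det_inv_factorial_sub {K : Type*} [Field K] [CharZero K] {n : ℕ} {a : Fin n → ℕ}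
    (ha : ∀ i j : Fin n, (j : ℕ) ≤ a i) :
    (of fun i j : Fin n => ((a i - j).factorial : K)⁻¹).det =
      (∏ i, ((a i).factorial : K)⁻¹) * (vandermonde fun i => (a i : K)).det := by
  rw [← det_descFactorial, ← det_mul_column]
  congr 1 with i j
  rw [of_apply, of_apply, of_apply, ← Nat.factorial_mul_descFactorial (ha i j), Nat.cast_mul,
    mul_inv, inv_mul_cancel_right₀ (mod_cast (Nat.descFactorial_pos.2 (ha i j)).ne')]

lemma det_vandermonde_eq_prod_filter {R : Type*} [CommRing R] {n : ℕ} (v : Fin n → R) :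
    (vandermonde v).det =
      ∏ p ∈ univ.filter (fun p : Fin n × Fin n => p.1 < p.2), (v p.2 - v p.1) := by
  rw [det_vandermonde, prod_filter, Fintype.prod_prod_type]
  simp only [← prod_filter, filter_lt_eq_Ioi]

lemma det_vandermonde_comp_perm {R : Type*} [CommRing R] {n : ℕ} (v : Fin n → R)
    (σ : Equiv.Perm (Fin n)) :
    (vandermonde (v ∘ σ)).det = Equiv.Perm.sign σ * (vandermonde v).det :=
  det_permute σ (vandermonde v)

lemma continuous_det_vandermonde {R : Type*} [CommRing R] [TopologicalSpace R]
    [IsTopologicalRing R] {n : ℕ} : Continuous fun v : Fin n → R => (vandermonde v).det :=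
  Continuous.matrix_det (by unfold vandermonde; fun_prop)

end Determinants

section Andreief

open Matrix Nat

lemma torusIntegral_mul_det_of_alternating {n : ℕ} {c : ℂ} {R : ℝ} {G : (Fin n → ℂ) → ℂ}
    {f : Fin n → ℂ → ℂ} (hG : ∀ (σ : Equiv.Perm (Fin n)) w, G (w ∘ σ) = Equiv.Perm.sign σ * G w)
    (hint : TorusIntegrable (fun w => G w * ∏ i, f i (w i)) (fun _ => c) fun _ => R) :
    (∯ w in T(fun _ => c, fun _ => R), G w * (of fun i j => f j (w i)).det) =
      n ! * ∯ w in T(fun _ => c, fun _ => R), G w * ∏ i, f i (w i) := by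
  set F : (Fin n → ℂ) → ℂ := fun w => G w * ∏ i, f i (w i)
  have expand (w : Fin n → ℂ) : G w * (of fun i j => f j (w i)).det =
      ∑ σ : Equiv.Perm (Fin n), F (w ∘ σ) := by
    simp only [det_apply', mul_sum, F, hG, of_apply, Function.comp_apply]
    exact sum_congr rfl fun σ _ => by ring
  simp only [expand]
  rw [torusIntegral_finset_sum fun σ _ => torusIntegrable_comp_perm σ hint]
  simp only [torusIntegral_comp_perm F]
  simp [Fintype.card_perm, Function.comp_def]

lemma torusIntegral_prod_mul_det {n : ℕ} {c : Fin n → ℂ} {R : Fin n → ℝ} {f g : Fin n → ℂ → ℂ}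
    (hf : ∀ i, ContinuousOn (f i) (Metric.sphere (c i) |R i|))
    (hg : ∀ i j, ContinuousOn (g j) (Metric.sphere (c i) |R i|)) :
    (∯ w in T(c, R), (∏ i, f i (w i)) * (of fun i j => g j (w i)).det) =
      (of fun i j => ∮ z in C(c i, R i), f i z * g j z).det := by
  have expand (w : Fin n → ℂ) : (∏ i, f i (w i)) * (of fun i j => g j (w i)).det =
      ∑ σ : Equiv.Perm (Fin n), Equiv.Perm.sign σ * ∏ i, f i (w i) * g (σ i) (w i) := by
    rw [← det_transpose, det_apply', mul_sum]
    refine sum_congr rfl fun σ _ => ?_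
    simp only [transpose_apply, of_apply, prod_mul_distrib]
    ring
  simp only [expand]
  rw [torusIntegral_finset_sum fun σ _ => torusIntegrable_of_continuousOn ?_,
    ← det_transpose, det_apply']
  · simp only [torusIntegral_const_mul, transpose_apply, of_apply]
    exact sum_congr rfl fun σ _ =>
      congrArg _ (torusIntegral_prod (fun i z => f i z * g (σ i) z) c R)
  · refine continuousOn_const.mul (continuousOn_finsetProd _ fun i _ => ?_)
    exact ((hf i).mul (hg i (σ i))).comp (by fun_prop) fun w hw => hw i trivial

end Andreief

section Expansion

lemma filter_piFinset_range_eq_piAntidiag {ι : Type*} [Fintype ι] [DecidableEq ι] (n : ℕ) :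
    (Fintype.piFinset fun _ : ι => range (n + 1)).filter (fun g => ∑ i, g i = n) =
      piAntidiag univ n := by
  ext g
  simp only [mem_filter, Fintype.mem_piFinset, mem_range, mem_piAntidiag, mem_univ, implies_true,
    and_true, and_iff_right_iff_imp]
  rintro rfl i
  exact Nat.lt_succ_of_le (single_le_sum_of_canonicallyOrdered (mem_univ i))

lemma filter_piFinset_piFinset_range_eq {ι κ : Type*} [Fintype ι] [DecidableEq ι] [Fintype κ]
    [DecidableEq κ] (n : κ → ℕ) [DecidablePred fun M : κ → ι → ℕ => ∀ j, ∑ i, M j i = n j] :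
    (Fintype.piFinset fun j => Fintype.piFinset fun _ : ι => range (n j + 1)).filter
        (fun M => ∀ j, ∑ i, M j i = n j) =
      Fintype.piFinset fun j => piAntidiag univ (n j) := by
  ext M
  simp only [← filter_piFinset_range_eq_piAntidiag, mem_filter, Fintype.mem_piFinset, forall_and]

/-- The exponent `∑ₛ s·m_{si}` of the `i`-th variable in the term of the multinomial expansion
indexed by `(m_{1i}) = g` and `(m_{(j+2)i}) = M j`; the entry `g 0` is the exponent of the
constant. -/
def powerSumExponent {k n : ℕ} (g : Fin (k + 1) → ℕ) (M : Fin n → Fin k → ℕ) (i : Fin k) : ℕ :=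
  g i.succ + ∑ j : Fin n, ((j : ℕ) + 2) * M j i

lemma add_sum_powerSumExponent {k n m : ℕ} {r : Fin n → ℕ} {g : Fin (k + 1) → ℕ}
    {M : Fin n → Fin k → ℕ} (hg : ∑ i, g i = m) (hM : ∀ j, ∑ i, M j i = r j) :
    g 0 + ∑ i, powerSumExponent g M i = m + ∑ j : Fin n, ((j : ℕ) + 2) * r j := by
  simp only [powerSumExponent, sum_add_distrib, ← hg, ← hM, Fin.sum_univ_succ, mul_sum, add_assoc]
  rw [sum_comm]

lemma add_sum_pow_eq_sum_piAntidiag {R : Type*} [CommSemiring R] {k : ℕ} (c : R) (x : Fin k → R)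
    (m : ℕ) :
    (c + ∑ i, x i) ^ m = ∑ g ∈ piAntidiag (univ : Finset (Fin (k + 1))) m,
      Nat.multinomial univ g * (c ^ g 0 * ∏ i, x i ^ g i.succ) := by
  simpa [Fin.sum_univ_succ, Fin.prod_univ_succ] using
    sum_pow_eq_sum_piAntidiag univ (Fin.cons c x : Fin (k + 1) → R) m

/-- The product `(c + p₁(x))ᵐ ∏ₛ pₛ(x) ^ mₛ` over `s ≥ 2`, with `pₛ` the power sums and
`m_(j+2) = r j`. -/
def powerSumProduct {R : Type*} [CommSemiring R] {k n : ℕ} (c : R) (m : ℕ) (r : Fin n → ℕ)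
    (x : Fin k → R) : R :=
  (c + ∑ i, x i) ^ m * ∏ j : Fin n, (∑ i, x i ^ ((j : ℕ) + 2)) ^ r j

lemma powerSumProduct_comp_perm {R : Type*} [CommSemiring R] {k n : ℕ} (c : R) (m : ℕ)
    (r : Fin n → ℕ) (σ : Equiv.Perm (Fin k)) (x : Fin k → R) :
    powerSumProduct c m r (x ∘ σ) = powerSumProduct c m r x := by
  simp only [powerSumProduct, Function.comp_apply, Equiv.sum_comp σ x,
    fun s => Equiv.sum_comp σ fun i => x i ^ (s + 2)]

lemma powerSumProduct_eq_sum {R : Type*} [CommSemiring R] {k n : ℕ} (c : R) (m : ℕ)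
    (r : Fin n → ℕ) (x : Fin k → R) :
    powerSumProduct c m r x =
      ∑ a ∈ piAntidiag univ m ×ˢ Fintype.piFinset fun j => piAntidiag univ (r j),
        c ^ a.1 0 * Nat.multinomial univ a.1 * (∏ j, (Nat.multinomial univ (a.2 j) : R)) *
          ∏ i, x i ^ powerSumExponent a.1 a.2 i := by
  have prod_eq (M : Fin n → Fin k → ℕ) : ∏ j : Fin n, ∏ i, (x i ^ ((j : ℕ) + 2)) ^ M j i =
      ∏ i, x i ^ ∑ j : Fin n, ((j : ℕ) + 2) * M j i := by
    rw [prod_comm]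
    simp only [← pow_mul, prod_pow_eq_pow_sum]
  simp only [powerSumProduct, add_sum_pow_eq_sum_piAntidiag, sum_pow_eq_sum_piAntidiag,
    prod_univ_sum, sum_mul_sum, sum_product, prod_mul_distrib, prod_eq]
  refine sum_congr rfl fun g _ => sum_congr rfl fun M _ => ?_
  simp only [powerSumExponent, pow_add _ (g _), prod_mul_distrib]
  ring

end Expansion

section Residues

open Matrix Nat

lemma circleIntegral_cexp_const_mul_div_pow (N : ℂ) (x : ℕ) :
    (∮ z in C(0, 1), Complex.exp (N * z) / z ^ (x + 1)) =
      2 * Real.pi * Complex.I * (N ^ x / x !) := by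
  have cauchy := DifferentiableOn.circleIntegral_one_div_sub_center_pow_smul (c := 0)
    (f := fun z => Complex.exp (N * z)) zero_lt_one x (by fun_prop)
  simp only [iteratedDeriv_cexp_const_mul, sub_zero, smul_eq_mul, mul_zero, Complex.exp_zero,
    mul_one, one_div_mul_eq_div] at cauchy
  rw [cauchy, div_mul_eq_mul_div, mul_div_assoc]

lemma continuousOn_cexp_const_mul_div_pow (N : ℂ) (x : ℕ) :
    ContinuousOn (fun z => Complex.exp (N * z) / z ^ x) (Metric.sphere 0 1) :=
  .div (by fun_prop) (by fun_prop) fun _ hz => pow_ne_zero _ (ne_zero_of_mem_unit_sphere ⟨_, hz⟩)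

lemma torusIntegral_cexp_div_pow_mul_det_vandermonde {k : ℕ} (N : ℂ) {a : Fin k → ℕ}
    (ha : ∀ i j : Fin k, (j : ℕ) ≤ a i) :
    (∯ w in T(0, 1), (∏ i, Complex.exp (N * w i) / w i ^ (a i + 1)) * (vandermonde w).det) =
      (2 * Real.pi * Complex.I) ^ k * (N ^ (∑ i, (a i - i)) *
        ((∏ i, ((a i)! : ℂ)⁻¹) * (vandermonde fun i => (a i : ℂ)).det)) := by
  have entry (i j : Fin k) :
      (∮ z in C(0, 1), Complex.exp (N * z) / z ^ (a i + 1) * z ^ (j : ℕ)) =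
        2 * Real.pi * Complex.I * (N ^ (a i - j) * ((a i - j)! : ℂ)⁻¹) := by
    rw [← div_eq_mul_inv, ← circleIntegral_cexp_const_mul_div_pow]
    refine circleIntegral.integral_congr zero_le_one fun z hz => ?_
    have hz : z ≠ 0 := ne_zero_of_mem_unit_sphere ⟨z, hz⟩
    have : z ^ (a i + 1) = z ^ (a i - j + 1) * z ^ (j : ℕ) := by
      rw [← pow_add, add_right_comm, Nat.sub_add_cancel (ha i j)]
    simp only [this]
    field_simp
  have andreief := torusIntegral_prod_mul_det (c := (0 : Fin k → ℂ)) (R := 1)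
    (f := fun i z => Complex.exp (N * z) / z ^ (a i + 1)) (g := fun i z => z ^ (i : ℕ))
    (fun i => by simpa using continuousOn_cexp_const_mul_div_pow N _) (fun i j => by fun_prop)
  refine andreief.trans ?_
  simp only [Pi.zero_apply, Pi.one_apply, entry]
  rw [← det_inv_factorial_sub ha, ← det_pow_sub_mul N ha]
  simpa only [of_apply, prod_const, Finset.card_univ, Fintype.card_fin] using
    det_mul_column (fun _ => 2 * (Real.pi : ℂ) * Complex.I)
      (of fun i j : Fin k => N ^ (a i - j) * ((a i - j)! : ℂ)⁻¹)

lemma sum_fin_two_mul_add_one (k : ℕ) : ∑ i : Fin k, (2 * (i : ℕ) + 1) = k ^ 2 := by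
  induction k with
  | zero => rfl
  | succ k ih =>
    simp only [Fin.sum_univ_castSucc, Fin.val_castSucc, ih, Fin.val_last]
    ring

lemma sum_two_mul_add_sub_sub {k : ℕ} (e : Fin k → ℕ) :
    ∑ i : Fin k, (2 * k + e i - (i + 1) - i) = k ^ 2 + ∑ i, e i := by
  have term (i : Fin k) : 2 * k + e i - (i + 1) - i = 2 * (i.rev : ℕ) + 1 + e i := by
    rw [Fin.val_rev]; omega
  rw [sum_congr rfl fun i _ => term i, sum_add_distrib, ← sum_fin_two_mul_add_one,
    ← Equiv.sum_comp Fin.revPerm fun i : Fin k => 2 * (i : ℕ) + 1]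
  rfl

lemma det_vandermonde_two_mul_add_sub {k : ℕ} (e : Fin k → ℕ) :
    (vandermonde fun i : Fin k => ((2 * k + e i - (i + 1) : ℕ) : ℂ)).det =
      ∏ p ∈ univ.filter (fun p : Fin k × Fin k => p.1 < p.2),
        (((e p.2 : ℤ) - (e p.1 : ℤ) - ((p.2 : ℕ) : ℤ) + ((p.1 : ℕ) : ℤ) : ℤ) : ℂ) := by
  have cast_node (i : Fin k) :
      ((2 * k + e i - (i + 1) : ℕ) : ℂ) = 2 * k + e i - (i + 1) := by
    rw [Nat.cast_sub (by omega)]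
    push_cast
    rfl
  rw [det_vandermonde_eq_prod_filter]
  refine prod_congr rfl fun p _ => ?_
  rw [cast_node, cast_node]
  push_cast
  ring

/-- The integrand that the monomial `∏ xᵢ ^ eᵢ` in `xᵢ = 1 / wᵢ` contributes, with one of the two
Vandermonde factors. -/
def monomialIntegrand {k : ℕ} (N : ℂ) (e : Fin k → ℕ) (w : Fin k → ℂ) : ℂ :=
  (∏ i, Complex.exp (N * w i) / w i ^ (2 * k)) * (∏ i, (w i)⁻¹ ^ e i) * (vandermonde w).det

/-- The value of `(2πi)⁻ᵏ ∮ ⋯ ∮ monomialIntegrand N e w · ∏ wᵢ ^ i`. The truncated subtraction is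
exact, as `i + 1 ≤ k`. -/
def monomialResidue {k : ℕ} (N : ℂ) (e : Fin k → ℕ) : ℂ :=
  N ^ (k ^ 2 + ∑ i, e i) * (∏ i : Fin k, ((2 * k + e i - (i + 1))! : ℂ)⁻¹) *
    ∏ p ∈ univ.filter (fun p : Fin k × Fin k => p.1 < p.2),
      (((e p.2 : ℤ) - (e p.1 : ℤ) - ((p.2 : ℕ) : ℤ) + ((p.1 : ℕ) : ℤ) : ℤ) : ℂ)

lemma continuousOn_monomialIntegrand {k : ℕ} (N : ℂ) (e : Fin k → ℕ) :
    ContinuousOn (monomialIntegrand N e) (Set.univ.pi fun _ => Metric.sphere 0 1) := by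
  have ne_zero {w : Fin k → ℂ} (hw : w ∈ Set.univ.pi fun _ => Metric.sphere 0 1) (i : Fin k) :
      w i ≠ 0 := ne_zero_of_mem_unit_sphere ⟨w i, hw i trivial⟩
  refine .mul (.mul ?_ ?_) ?_
  · exact continuousOn_finsetProd _ fun i _ =>
      (continuousOn_cexp_const_mul_div_pow N (2 * k)).comp (by fun_prop) fun w hw => hw i trivial
  · exact continuousOn_finsetProd _ fun i _ =>
      (ContinuousOn.inv₀ (by fun_prop) fun w hw => ne_zero hw i).pow _
  · exact continuous_det_vandermonde.continuousOn

lemma torusIntegral_monomialIntegrand_mul_prod {k : ℕ} (N : ℂ) (e : Fin k → ℕ) :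
    (∯ w in T(0, 1), monomialIntegrand N e w * ∏ i, w i ^ (i : ℕ)) =
      (2 * Real.pi * Complex.I) ^ k * monomialResidue N e := by
  rw [monomialResidue, ← sum_two_mul_add_sub_sub, ← det_vandermonde_two_mul_add_sub,
    mul_assoc (N ^ _), ← torusIntegral_cexp_div_pow_mul_det_vandermonde N fun i j => by omega]
  congr 1 with w
  have factor (i : Fin k) : Complex.exp (N * w i) / w i ^ (2 * k + e i - (i + 1) + 1) =
      Complex.exp (N * w i) / w i ^ (2 * k) * (w i)⁻¹ ^ e i * w i ^ (i : ℕ) := by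
    have exponent : 2 * k + e i = 2 * k + e i - (i + 1) + 1 + i := by omega
    generalize 2 * k + e i - (i + 1) = x at exponent ⊢
    rcases eq_or_ne (w i) 0 with h | h
    · simp [h, i.pos.ne']
    · rw [inv_pow, ← div_eq_mul_inv, div_div, ← pow_add, exponent, pow_add _ (x + 1), ← div_div,
        div_mul_cancel₀ _ (pow_ne_zero _ h)]
  simp only [factor, prod_mul_distrib, monomialIntegrand]
  ring

lemma multiCircle_mul_det_vandermonde_of_alternating {k : ℕ} {G : (Fin k → ℂ) → ℂ}
    (hG : ∀ (σ : Equiv.Perm (Fin k)) w, G (w ∘ σ) = Equiv.Perm.sign σ * G w)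
    (hcont : ContinuousOn G (Set.univ.pi fun _ => Metric.sphere 0 1)) :
    multiCircle k (fun w => G w * (vandermonde w).det) =
      k ! * ∯ w in T(0, 1), G w * ∏ i, w i ^ (i : ℕ) := by
  refine (multiCircle_eq_torusIntegral
    (hcont.mul continuous_det_vandermonde.continuousOn)).trans ?_
  exact torusIntegral_mul_det_of_alternating (f := fun i z => z ^ (i : ℕ)) hG
    (torusIntegrable_unit_of_continuousOn (hcont.mul (by fun_prop)))

lemma multiCircle_mul_vandermonde_sq {k : ℕ} {ι : Type*} (N : ℂ) (s : Finset ι) (c : ι → ℂ)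
    (e : ι → Fin k → ℕ) {P : (Fin k → ℂ) → ℂ} (hP : ∀ (σ : Equiv.Perm (Fin k)) x, P (x ∘ σ) = P x)
    (hexp : ∀ x, P x = ∑ a ∈ s, c a * ∏ i, x i ^ e a i) :
    multiCircle k (fun w =>
        (∏ i, Complex.exp (N * w i) / w i ^ (2 * k)) * P w⁻¹ * (vandermonde w).det ^ 2) =
      (2 * Real.pi * Complex.I) ^ k * k ! * ∑ a ∈ s, c a * monomialResidue N (e a) := by
  set G : (Fin k → ℂ) → ℂ := fun w =>
    (∏ i, Complex.exp (N * w i) / w i ^ (2 * k)) * P w⁻¹ * (vandermonde w).det with hG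
  have G_perm (σ : Equiv.Perm (Fin k)) (w) : G (w ∘ σ) = Equiv.Perm.sign σ * G w := by
    have P_perm : P (w ∘ σ)⁻¹ = P w⁻¹ := hP σ w⁻¹
    simp only [hG, det_vandermonde_comp_perm, Function.comp_apply, P_perm,
      Equiv.prod_comp σ fun i => Complex.exp (N * w i) / w i ^ (2 * k)]
    ring
  have G_eq (w) : G w = ∑ a ∈ s, c a * monomialIntegrand N (e a) w := by
    simp only [hG, hexp, monomialIntegrand, mul_sum, sum_mul, Pi.inv_apply]
    exact sum_congr rfl fun a _ => by ring
  have G_cont : ContinuousOn G (Set.univ.pi fun _ => Metric.sphere 0 1) := by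
    simp only [funext G_eq]
    exact continuousOn_finsetSum _ fun a _ =>
      continuousOn_const.mul (continuousOn_monomialIntegrand N (e a))
  have integrable (b : ι) :
      TorusIntegrable (fun w => c b * (monomialIntegrand N (e b) w * ∏ i, w i ^ (i : ℕ))) 0 1 :=
    torusIntegrable_unit_of_continuousOn <|
      continuousOn_const.mul ((continuousOn_monomialIntegrand N (e b)).mul (by fun_prop))
  calc
    _ = multiCircle k (fun w => G w * (vandermonde w).det) := by simp only [hG, sq, mul_assoc]
    _ = k ! * ∯ w in T(0, 1), G w * ∏ i, w i ^ (i : ℕ) :=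
      multiCircle_mul_det_vandermonde_of_alternating G_perm G_cont
    _ = k ! * ∑ a ∈ s, c a * ((2 * Real.pi * Complex.I) ^ k * monomialResidue N (e a)) := by
      simp only [G_eq, sum_mul, mul_assoc]
      rw [torusIntegral_finset_sum fun a _ => integrable a]
      simp only [torusIntegral_const_mul, torusIntegral_monomialIntegrand_mul_prod, mul_assoc]
    _ = _ := by simp only [mul_left_comm (c _), ← mul_sum]; ring

lemma multiCircle_integrand_eq {k n : ℕ} (N : ℂ) (m : ℕ) (r : Fin n → ℕ) (w : Fin k → ℂ) :
    Complex.exp (N * ∑ i, w i) / (∏ i, w i ^ (2 * k)) *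
        (∏ p ∈ univ.filter (fun p : Fin k × Fin k => p.1 < p.2), (w p.1 - w p.2)) ^ 2 *
        ((∑ l, 1 / w l) - N) ^ m * ∏ j : Fin n, (∑ l, 1 / w l ^ ((j : ℕ) + 2)) ^ r j =
      (∏ i, Complex.exp (N * w i) / w i ^ (2 * k)) * powerSumProduct (-N) m r w⁻¹ *
        (vandermonde w).det ^ 2 := by
  have vandermonde_sq : (∏ p ∈ univ.filter (fun p : Fin k × Fin k => p.1 < p.2),
      (w p.1 - w p.2)) ^ 2 = (vandermonde w).det ^ 2 := by
    rw [det_vandermonde_eq_prod_filter, ← prod_pow, ← prod_pow]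
    exact prod_congr rfl fun p _ => sub_sq_comm _ _
  rw [vandermonde_sq]
  simp only [powerSumProduct, prod_div_distrib, ← Complex.exp_sum, ← mul_sum, Pi.inv_apply,
    inv_pow, one_div, sub_eq_neg_add]
  ring

lemma neg_pow_mul_monomialResidue {k n m : ℕ} {r : Fin n → ℕ} {g : Fin (k + 1) → ℕ}
    {M : Fin n → Fin k → ℕ} (N : ℂ) (hg : ∑ i, g i = m) (hM : ∀ j, ∑ i, M j i = r j) :
    (-N) ^ g 0 * monomialResidue N (powerSumExponent g M) =
      N ^ (k ^ 2 + m + ∑ j : Fin n, ((j : ℕ) + 2) * r j) * ((-1) ^ g 0 *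
        ((∏ i : Fin k, ((2 * k + powerSumExponent g M i - (i + 1))! : ℂ)⁻¹) *
          ∏ p ∈ univ.filter (fun p : Fin k × Fin k => p.1 < p.2),
            (((powerSumExponent g M p.2 : ℤ) - (powerSumExponent g M p.1 : ℤ) -
              ((p.2 : ℕ) : ℤ) + ((p.1 : ℕ) : ℤ) : ℤ) : ℂ))) := by
  rw [monomialResidue, add_assoc, ← add_sum_powerSumExponent hg hM, neg_pow]
  ring

end Residues

/-- **Proposition (the `k`-fold contour integral with `(Σ1/w_l − N)^{m₁}`).**
Here `n = nn + 1 ≥ 1` and the tuple `(m₁,…,mₙ)` is encoded by `m1 : ℕ` (for `m₁`) and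
`mr : Fin nn → ℕ` (with `m_(j+2) = mr j`); `Δ²(w) = (∏_{i<j}(wᵢ−w_j))²`.  On the right,
`g : Fin (k+1) → ℕ` encodes `(m₁₀,m₁₁,…,m₁ₖ)` with `Σ g = m₁` and, for each `s = j+2`,
`Mm j : Fin k → ℕ` encodes `(m_{s1},…,m_{sk})` with sum `m_s`; the quantity
`Σ_{s=1}^n s·m_{si}` is `g i.succ + Σ_j (j+2)·Mm j i`, and `−j+i` (1-based) equals
`−(p.2)+p.1` (0-based). -/
theorem contour_integral_prop_full (k nn : ℕ) (hk : 1 ≤ k) (m1 : ℕ) (mr : Fin nn → ℕ)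
    (N : ℂ) :
    ((2 * (Real.pi : ℂ) * Complex.I) ^ k * (k.factorial : ℂ))⁻¹ *
        multiCircle k (fun w =>
          Complex.exp (N * ∑ i, w i) / (∏ i, w i ^ (2 * k)) *
            (∏ p ∈ Finset.univ.filter (fun p : Fin k × Fin k => p.1 < p.2),
              (w p.1 - w p.2)) ^ 2 *
            ((∑ l, 1 / w l) - N) ^ m1 *
            ∏ j : Fin nn, (∑ l, 1 / w l ^ ((j : ℕ) + 2)) ^ (mr j)) =
      N ^ (k ^ 2 + m1 + ∑ j : Fin nn, ((j : ℕ) + 2) * mr j) *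
        ∑ g ∈ (Fintype.piFinset fun _ : Fin (k + 1) => Finset.range (m1 + 1)).filter
            (fun g => ∑ i, g i = m1),
          ∑ Mm ∈ (Fintype.piFinset fun j : Fin nn => Fintype.piFinset fun _ : Fin k =>
                Finset.range (mr j + 1)).filter (fun Mm => ∀ j, ∑ i, Mm j i = mr j),
            (-1 : ℂ) ^ (g 0) * (Nat.multinomial Finset.univ g : ℂ) *
              (∏ j, (Nat.multinomial Finset.univ (Mm j) : ℂ)) *
              (∏ i : Fin k, (1 : ℂ) /
                (((2 * k + (g i.succ + ∑ j : Fin nn, ((j : ℕ) + 2) * Mm j i)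
                    - ((i : ℕ) + 1)).factorial : ℂ))) *
              ∏ p ∈ Finset.univ.filter (fun p : Fin k × Fin k => p.1 < p.2),
                ((((g p.2.succ + ∑ j : Fin nn, ((j : ℕ) + 2) * Mm j p.2 : ℕ) : ℤ)
                    - ((g p.1.succ + ∑ j : Fin nn, ((j : ℕ) + 2) * Mm j p.1 : ℕ) : ℤ)
                    - ((p.2 : ℕ) : ℤ) + ((p.1 : ℕ) : ℤ) : ℤ) : ℂ) := by
  have integral := multiCircle_mul_vandermonde_sq (k := k) N _ _ _
    (powerSumProduct_comp_perm (-N) m1 mr) (powerSumProduct_eq_sum (-N) m1 mr)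
  have prefactor_ne_zero : (2 * (Real.pi : ℂ) * Complex.I) ^ k * (k.factorial : ℂ) ≠ 0 :=
    mul_ne_zero (pow_ne_zero _ Complex.two_pi_I_ne_zero) (mod_cast k.factorial_ne_zero)
  simp only [multiCircle_integrand_eq]
  rw [integral, inv_mul_cancel_left₀ prefactor_ne_zero, filter_piFinset_range_eq_piAntidiag,
    filter_piFinset_piFinset_range_eq, sum_product, mul_sum]
  refine sum_congr rfl fun g hg => ?_
  rw [mul_sum]
  refine sum_congr rfl fun Mm hMm => ?_
  have hg : ∑ i, g i = m1 := (mem_piAntidiag.1 hg).1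
  have hMm (j) : ∑ i, Mm j i = mr j := (mem_piAntidiag.1 (Fintype.mem_piFinset.1 hMm j)).1
  have residue := neg_pow_mul_monomialResidue N hg hMm
  simp only [powerSumExponent] at residue
  simp only [one_div]
  linear_combination (Nat.multinomial univ g * ∏ j, (Nat.multinomial univ (Mm j) : ℂ)) * residue
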